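/- Fix integers n and t with 2 ≤ t < n. Let C ⊆ ℤ/nℤ be a t-sparse set, let A ⊆ {c + t : c ∈ C}, and let W = (⋃_{c ∈ C} F(c)) ∪ A; assume W ≠ ℤ/nℤ. Suppose h ∈ Ind(W) with h − 1 ∉ Ind(W), and let m ≥ 1 be the integer such that h + k ∈ Ind(W) for all 0 ≤ k < m and h + m ∉ Ind(W). Then m ≡ 1 (mod t+1) or m ≡ 2 (mod t+1). -/

import Mathlib

/-- The facet `F(i) = {i, i+1, …, i+t-1}` of the path complex `Δ_t(C_n)`
with standard labeling, vertices identified with `ℤ/nℤ`. -/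
def facet (n t : ℕ) (i : ZMod n) : Finset (ZMod n) :=
  (Finset.range t).image (fun r : ℕ => i + (r : ZMod n))

/-- A subset `C` of `ℤ/nℤ` is `t`-sparse if for every `c ∈ C` and every `1 ≤ k ≤ t`
one has `c + k ∉ C`. -/
def TSparse (n t : ℕ) (C : Finset (ZMod n)) : Prop :=
  ∀ c ∈ C, ∀ k : ℕ, 1 ≤ k → k ≤ t → c + (k : ZMod n) ∉ C

/-- `Ind(W) = {j : F(j) ⊆ W}`, the index set of the induced subcollection of
`Δ_t(C_n)` on the vertex set `W`. -/
def indSet (n t : ℕ) (W : Finset (ZMod n)) : Set (ZMod n) :=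
  {j | facet n t j ⊆ W}

/-!
A vertex of `W` has the form `c + r` with `c ∈ C` and `0 ≤ r ≤ t`, and `F(c) ⊆ W` for every `c ∈ C`,
so a run of `Ind(W)` can only start at an element of `C`. If a run starting at `c ∈ C` has length at
least `3`, then `F(c + 2) ⊆ W`, so `c + t` and `c + t + 1` lie in `W`. By sparsity, `c + t + 1` can
only be covered by being itself in `C`. Hence the run contains `c, …, c + t + 1`, and deleting its
first `t + 1` elements leaves a run that again starts at an element of `C`. After finitely many such
deletions the remaining run has length `1` or `2`.
-/

section

variable {n t : ℕ} {C W : Finset (ZMod n)}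

theorem mem_facet {i v : ZMod n} : v ∈ facet n t i ↔ ∃ r < t, i + (r : ZMod n) = v := by
  simp only [facet, Finset.mem_image, Finset.mem_range]

theorem facet_succ (i : ZMod n) :
    facet n (t + 1) i = insert (i + (t : ZMod n)) (facet n t i) := by
  simp only [facet, Finset.range_add_one, Finset.image_insert]

theorem add_natCast_mem_indSet_iff {i : ZMod n} {a : ℕ} :
    i + (a : ZMod n) ∈ indSet n t W ↔ ∀ k : ℕ, a ≤ k → k < a + t → i + (k : ZMod n) ∈ W := by
  simp only [indSet, Set.mem_ofPred_eq, Finset.subset_iff, mem_facet]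
  constructor
  · intro h k hak hkt
    refine h ⟨k - a, by lia, ?_⟩
    rw [add_assoc, ← Nat.cast_add, Nat.add_sub_cancel' hak]
  · rintro h _ ⟨r, hr, rfl⟩
    rw [add_assoc, ← Nat.cast_add]
    exact h (a + r) (by lia) (by lia)

theorem mem_indSet_iff {i : ZMod n} :
    i ∈ indSet n t W ↔ ∀ k < t, i + (k : ZMod n) ∈ W := by
  simpa using add_natCast_mem_indSet_iff (t := t) (W := W) (i := i) (a := 0)

theorem add_natCast_mem_indSet_of_forall_mem {i : ZMod n} {m : ℕ}
    (hW : ∀ k < m, i + (k : ZMod n) ∈ W) (hm : i + (m : ZMod n) ∈ indSet n t W)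
    {a : ℕ} (ha : a ≤ m) : i + (a : ZMod n) ∈ indSet n t W := by
  rw [add_natCast_mem_indSet_iff] at hm ⊢
  intro k _ hkt
  obtain hkm | hmk := lt_or_ge k m
  · exact hW k hkm
  · exact hm k hmk (by lia)

theorem coe_subset_indSet_iff : (C : Set (ZMod n)) ⊆ indSet n t W ↔ C.biUnion (facet n t) ⊆ W :=
  Finset.biUnion_subset.symm

theorem biUnion_facet_union_subset {A : Finset (ZMod n)}
    (hA : A ⊆ C.image (fun c => c + (t : ZMod n))) :
    C.biUnion (facet n t) ∪ A ⊆ C.biUnion (facet n (t + 1)) := by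
  refine Finset.union_subset
    (Finset.biUnion_mono fun c _ => facet_succ c ▸ Finset.subset_insert _ _) (hA.trans ?_)
  exact Finset.image_subset_iff.2 fun c hc =>
    Finset.mem_biUnion.2 ⟨c, hc, facet_succ c ▸ Finset.mem_insert_self _ _⟩

theorem mem_of_mem_indSet_of_sub_one_notMem
    (hCW : (C : Set (ZMod n)) ⊆ indSet n t W) (hWC : W ⊆ C.biUnion (facet n (t + 1)))
    {h : ZMod n} (hh : h ∈ indSet n t W) (hprev : h - 1 ∉ indSet n t W) : h ∈ C := by
  have ht : 0 < t := Nat.pos_of_ne_zero (by rintro rfl; simp [mem_indSet_iff] at hprev)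
  have hhW : h ∈ W := by simpa using mem_indSet_iff.1 hh 0 ht
  obtain ⟨c, hc, hhc⟩ := Finset.mem_biUnion.1 (hWC hhW)
  obtain ⟨r, hr, rfl⟩ := mem_facet.1 hhc
  cases r with
  | zero => simpa using hc
  | succ r =>
    have hpred : c + ((r + 1 : ℕ) : ZMod n) - 1 = c + (r : ZMod n) := by push_cast; ring
    rw [hpred] at hprev
    exact (hprev <| add_natCast_mem_indSet_of_forall_mem
      (fun k hk => mem_indSet_iff.1 (hCW hc) k (by lia)) hh r.le_succ).elim

theorem TSparse.add_succ_mem (hC : TSparse n t C) {c : ZMod n} (hc : c ∈ C)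
    (hv : c + ((t + 1 : ℕ) : ZMod n) ∈ C.biUnion (facet n (t + 1))) :
    c + ((t + 1 : ℕ) : ZMod n) ∈ C := by
  obtain ⟨c', hc', hvc'⟩ := Finset.mem_biUnion.1 hv
  obtain ⟨r, hr, hrv⟩ := mem_facet.1 hvc'
  have hc'_eq : c' = c + ((t + 1 - r : ℕ) : ZMod n) := by
    rw [Nat.cast_sub hr.le]
    linear_combination hrv
  obtain rfl | hr0 := r.eq_zero_or_pos
  · rwa [hc'_eq] at hc'
  · exact (hC c hc (t + 1 - r) (by lia) (by lia) (hc'_eq ▸ hc')).elim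

theorem TSparse.add_succ_mem_of_add_two_mem_indSet (ht : 0 < t) (hC : TSparse n t C)
    (hWC : W ⊆ C.biUnion (facet n (t + 1))) {c : ZMod n} (hc : c ∈ C)
    (hc2 : c + ((2 : ℕ) : ZMod n) ∈ indSet n t W) : c + ((t + 1 : ℕ) : ZMod n) ∈ C :=
  hC.add_succ_mem hc (hWC (add_natCast_mem_indSet_iff.1 hc2 (t + 1) (by lia) (by lia)))

theorem add_natCast_mem_indSet_of_le_succ (ht : 2 ≤ t) {c : ZMod n} (hc : c ∈ indSet n t W)
    (hc2 : c + ((2 : ℕ) : ZMod n) ∈ indSet n t W)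
    (hsucc : c + ((t + 1 : ℕ) : ZMod n) ∈ indSet n t W) {a : ℕ} (ha : a ≤ t + 1) :
    c + (a : ZMod n) ∈ indSet n t W := by
  refine add_natCast_mem_indSet_of_forall_mem (fun k hk => ?_) hsucc ha
  obtain hkt | rfl := Nat.lt_succ_iff_lt_or_eq.1 hk
  · exact mem_indSet_iff.1 hc k hkt
  · exact add_natCast_mem_indSet_iff.1 hc2 k ht (by lia)

theorem TSparse.run_length_mod_eq_one_or_two (ht : 2 ≤ t) (hC : TSparse n t C)
    (hCW : (C : Set (ZMod n)) ⊆ indSet n t W) (hWC : W ⊆ C.biUnion (facet n (t + 1)))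
    {m : ℕ} {c : ZMod n} (hc : c ∈ C)
    (hrun : ∀ k : ℕ, k < m → c + (k : ZMod n) ∈ indSet n t W)
    (hend : c + (m : ZMod n) ∉ indSet n t W) :
    m % (t + 1) = 1 ∨ m % (t + 1) = 2 := by
  induction m using Nat.strong_induction_on generalizing c with
  | _ m ih =>
  have hpos : m ≠ 0 := by
    rintro rfl
    exact hend (by simpa using hCW hc)
  obtain hm2 | hm2 := le_or_gt m 2
  · rw [Nat.mod_eq_of_lt (by lia)]
    lia
  · have hc2 := hrun 2 hm2
    have hsucc := hC.add_succ_mem_of_add_two_mem_indSet (by lia) hWC hc hc2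
    have hle : t + 1 ≤ m := by
      by_contra! hlt
      exact hend (add_natCast_mem_indSet_of_le_succ ht (hCW hc) hc2 (hCW hsucc) hlt.le)
    obtain ⟨p, rfl⟩ := Nat.exists_eq_add_of_le hle
    rw [Nat.add_mod_left]
    refine ih p (by lia) hsucc (fun k hk => ?_) ?_
    · rw [add_assoc, ← Nat.cast_add]
      exact hrun _ (by lia)
    · rwa [add_assoc, ← Nat.cast_add]

end

/-- Core of Proposition 4.8: for a `t`-sparse set `C`, `A ⊆ {c + t : c ∈ C}` and
`W = (⋃_{c ∈ C} F(c)) ∪ A ≠ ℤ/nℤ`, every maximal cyclic interval (run) of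
`Ind(W)` — starting at `h ∈ Ind(W)` with `h - 1 ∉ Ind(W)` and of length `m` —
has length congruent to `1` or `2` modulo `t + 1`. -/
theorem stmt_12 (n t : ℕ) (ht : 2 ≤ t) (htn : t < n)
    (C A : Finset (ZMod n)) (hC : TSparse n t C)
    (hA : A ⊆ C.image (fun c => c + (t : ZMod n)))
    (hne : ((C.biUnion (facet n t) ∪ A : Finset (ZMod n)) : Set (ZMod n)) ≠ Set.univ)
    (h : ZMod n) (m : ℕ) (hm : 1 ≤ m)
    (hh : h ∈ indSet n t (C.biUnion (facet n t) ∪ A))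
    (hprev : h - 1 ∉ indSet n t (C.biUnion (facet n t) ∪ A))
    (hrun : ∀ k : ℕ, k < m → h + (k : ZMod n) ∈ indSet n t (C.biUnion (facet n t) ∪ A))
    (hend : h + (m : ZMod n) ∉ indSet n t (C.biUnion (facet n t) ∪ A)) :
    m % (t + 1) = 1 ∨ m % (t + 1) = 2 := by
  have hCW : (C : Set (ZMod n)) ⊆ indSet n t (C.biUnion (facet n t) ∪ A) :=
    coe_subset_indSet_iff.2 Finset.subset_union_left
  have hWC := biUnion_facet_union_subset hA
  have hhC : h ∈ C := mem_of_mem_indSet_of_sub_one_notMem hCW hWC hh hprev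
  exact hC.run_length_mod_eq_one_or_two ht hCW hWC hhC hrun hend
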